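/- (Corollary 4.6, first identity.) In U(gl(m,ℂ)), for every q ≥ 0 and all 1 ≤ k,l ≤ m, ẽ_{kl}^q = (−1)^q · Σ_{p=0}^q ( Σ_{s=p}^q binom(q,s)·(−m)^{q−s}·K_{s−p}(−c) ) · e_{lk}^p (note the transposed indices l,k on the right-hand side). -/

import Mathlib

open Finset

attribute [local instance 100] LieRing.ofAssociativeRing

/-- `gl(m, ℂ)`: the Lie algebra of `m × m` complex matrices. -/
abbrev glm (m : ℕ) := Matrix (Fin m) (Fin m) ℂ

/-- The universal enveloping algebra `U(gl(m,ℂ))`. -/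
abbrev UEA (m : ℕ) := UniversalEnvelopingAlgebra ℂ (glm m)

/-- The image of the matrix unit `e_{kl}` in `U(gl(m,ℂ))`. -/
noncomputable def E {m : ℕ} (k l : Fin m) : UEA m :=
  UniversalEnvelopingAlgebra.ι ℂ (Matrix.single k l (1 : ℂ))

/-- `e_{kl}^q`, defined by `e_{kl}^0 = δ_{kl}` and `e_{kl}^{q+1} = Σ_i e_{ki} e_{il}^q`. -/
noncomputable def Epow {m : ℕ} : ℕ → Fin m → Fin m → UEA m
  | 0, k, l => if k = l then 1 else 0
  | q + 1, k, l => ∑ i, E k i * Epow q i l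

/-- `ẽ_{kl}^q`, defined by `ẽ_{kl}^0 = δ_{kl}` and `ẽ_{kl}^{q+1} = −Σ_i e_{ik} ẽ_{il}^q`. -/
noncomputable def Etil {m : ℕ} : ℕ → Fin m → Fin m → UEA m
  | 0, k, l => if k = l then 1 else 0
  | q + 1, k, l => -∑ i, E i k * Etil q i l

/-- The Casimir element `c_q = Σ_k e_{kk}^q`. -/
noncomputable def Cas (m : ℕ) (q : ℕ) : UEA m := ∑ k : Fin m, Epow q k k

/-- The Casimir element `c̃_q = Σ_k ẽ_{kk}^q`. -/
noncomputable def CasT (m : ℕ) (q : ℕ) : UEA m := ∑ k : Fin m, Etil q k k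

/-- `K_n(−c) ∈ U(gl(m,ℂ))`: `K_0(−c) = 1` and `K_n(−c) = Σ_{p=0}^{n−1} K_p(−c)·c_{n−1−p}`. -/
noncomputable def Kc (m : ℕ) : ℕ → UEA m
  | 0 => 1
  | n + 1 => ∑ p ∈ (Finset.range (n + 1)).attach, Kc m p.1 * Cas m (n - p.1)
  decreasing_by exact Finset.mem_range.mp p.2

theorem E_comm {m : ℕ} (a b c d : Fin m) :
    E a b * E c d = E c d * E a b + (if b = c then E a d else 0) - (if d = a then E c b else 0) := by
  have h := LieHom.map_lie (UniversalEnvelopingAlgebra.ι ℂ (L := glm m))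
    (Matrix.single a b (1 : ℂ)) (Matrix.single c d (1 : ℂ))
  rw [Ring.lie_def, Ring.lie_def, map_sub] at h
  have h1 : ∀ a b c d : Fin m, (UniversalEnvelopingAlgebra.ι ℂ (L := glm m))
      (Matrix.single a b (1 : ℂ) * Matrix.single c d (1 : ℂ)) = if b = c then E a d else 0 := by
    intro a b c d
    split_ifs with hbc
    · subst hbc
      simp [E]
    · rw [Matrix.single_mul_single_of_ne _ _ _ _ hbc, map_zero]
  rw [h1, h1] at h
  change _ = E a b * E c d - E c d * E a b at h
  rw [add_sub_assoc, h]
  abel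

theorem Epow_comm {m : ℕ} (a b : Fin m) (p : ℕ) : ∀ c d : Fin m,
    E a b * Epow p c d = Epow p c d * E a b + (if b = c then Epow p a d else 0)
      - (if d = a then Epow p c b else 0) := by
  induction p with
  | zero =>
    intro c d
    simp only [Epow]
    by_cases h1 : c = d <;> by_cases h2 : b = c <;> by_cases h3 : d = a <;> subst_vars <;>
      simp_all [eq_comm]
  | succ p ih =>
    intro c d
    simp only [Epow]
    have : ∀ i, E a b * (E c i * Epow p i d) = E c i * Epow p i d * E a b
        + (if b = c then E a i * Epow p i d else 0)
        - (if d = a then E c i * Epow p i b else 0)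
        + ((if b = i then E c i * Epow p a d else 0) - (if i = a then E c b * Epow p i d else 0)) := by
      intro i
      rw [← mul_assoc, E_comm, sub_mul, add_mul, mul_assoc, ih]
      split_ifs <;> subst_vars <;> simp only [mul_sub, mul_add, mul_assoc, zero_mul, mul_zero] <;> abel
    rw [Finset.mul_sum, Finset.sum_congr rfl (fun i _ => this i)]
    simp only [Finset.sum_add_distrib, Finset.sum_sub_distrib, Finset.sum_mul]
    split_ifs <;> simp

theorem Epow_succ' {m : ℕ} (p : ℕ) : ∀ k l : Fin m,
    Epow (p + 1) k l = ∑ i, Epow p k i * E i l := by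
  induction p with
  | zero => intro k l; simp [Epow]
  | succ p ih =>
    intro k l
    rw [Epow]
    have h : ∀ i, Epow (p + 1) k i = ∑ j, E k j * Epow p j i := fun i => by rw [Epow]
    simp only [h]
    simp only [ih, Finset.mul_sum, Finset.sum_mul, mul_assoc]
    rw [Finset.sum_comm]

theorem Cas_comm {m : ℕ} (p : ℕ) (a b : Fin m) : Commute (E a b) (Cas m p) := by
  unfold Cas
  rw [Commute, SemiconjBy, Finset.mul_sum, Finset.sum_mul]
  simp only [Epow_comm a b p, Finset.sum_add_distrib, Finset.sum_sub_distrib]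
  simp

theorem Kc_succ (m n : ℕ) :
    Kc m (n + 1) = ∑ p ∈ Finset.range (n + 1), Kc m p * Cas m (n - p) := by
  rw [Kc, Finset.sum_attach (Finset.range (n + 1)) (fun p => Kc m p * Cas m (n - p))]

theorem Kc_comm {m : ℕ} (n : ℕ) (a b : Fin m) : Commute (E a b) (Kc m n) := by
  induction n using Nat.strong_induction_on with
  | _ n ih =>
    cases n with
    | zero => rw [Kc]; exact Commute.one_right _
    | succ n =>
      rw [Kc_succ]
      refine Commute.sum_right _ _ _ fun p hp => ?_
      exact (ih p (Finset.mem_range.mp hp)).mul_right (Cas_comm _ a b)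

theorem step_Epow {m : ℕ} (p : ℕ) (k l : Fin m) :
    ∑ i, E i k * Epow p l i = Epow (p + 1) l k + Cas m p * Epow 0 l k
      - (m : ℂ) • Epow p l k := by
  simp only [Epow_comm, Finset.sum_add_distrib, Finset.sum_sub_distrib, ← Epow_succ']
  congr 1
  · congr 1
    simp only [Epow]
    by_cases h : k = l
    · simp [h, Cas]
    · simp [h, Ne.symm h]
  · simp [Nat.cast_smul_eq_nsmul]

noncomputable def Gaux {m : ℕ} (s : ℕ) (l k : Fin m) : UEA m :=
  ∑ p ∈ Finset.range (s + 1), Kc m (s - p) * Epow p l k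

theorem step_G {m : ℕ} (s : ℕ) (k l : Fin m) :
    ∑ i, E i k * Gaux s l i = Gaux (s + 1) l k - (m : ℂ) • Gaux s l k := by
  have h1 : ∑ i, E i k * Gaux s l i
      = ∑ p ∈ Finset.range (s + 1), Kc m (s - p) * ∑ i, E i k * Epow p l i := by
    simp only [Gaux, Finset.mul_sum]
    rw [Finset.sum_comm]
    refine Finset.sum_congr rfl fun p _ => Finset.sum_congr rfl fun i _ => ?_
    rw [← mul_assoc, (Kc_comm (s - p) i k).eq, mul_assoc]
  rw [h1]
  simp only [step_Epow, mul_sub, mul_add, Finset.sum_add_distrib, Finset.sum_sub_distrib]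
  congr 1
  · rw [Gaux, Finset.sum_range_succ' _ (s + 1)]
    congr 1
    · refine Finset.sum_congr rfl fun p _ => ?_
      rw [Nat.add_sub_add_right]
    · rw [Nat.sub_zero, Kc_succ, Finset.sum_mul, ← Finset.sum_range_reflect]
      refine Finset.sum_congr rfl fun p hp => ?_
      have := Finset.mem_range.mp hp
      rw [← mul_assoc]
      congr 3; omega
  · simp only [Gaux, Finset.smul_sum, mul_smul_comm]

theorem Etil_eq {m : ℕ} (q : ℕ) : ∀ k l : Fin m,
    Etil q k l = (-1 : ℂ) ^ q • ∑ ij ∈ Finset.HasAntidiagonal.antidiagonal q,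
      q.choose ij.1 • ((-(m : ℂ)) ^ ij.2 • Gaux ij.1 l k) := by
  induction q with
  | zero => intro k l; simp [Etil, Gaux, Epow, Kc, eq_comm]
  | succ q ih =>
    intro k l
    rw [Finset.sum_antidiagonal_choose_succ_nsmul
      (fun i j => (-(m : ℂ)) ^ j • Gaux i l k), Etil]
    simp only [ih, mul_smul_comm, ← Finset.smul_sum, Finset.mul_sum]
    rw [Finset.sum_comm, pow_succ, mul_neg_one, neg_smul]
    congr 2
    simp only [mul_smul_comm, ← Finset.smul_sum, step_G]
    rw [← Finset.sum_add_distrib]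
    refine Finset.sum_congr rfl fun ij hij => ?_
    rw [← Nat.choose_symm_of_eq_add (Finset.HasAntidiagonal.mem_antidiagonal.mp hij).symm, ← smul_add]
    congr 1
    rw [smul_sub, pow_succ, mul_smul, neg_smul, smul_neg]
    abel

/-- Corollary 4.6, first identity:
`ẽ_{kl}^q = (−1)^q Σ_{p=0}^q ( Σ_{s=p}^q C(q,s) (−m)^{q−s} K_{s−p}(−c) ) e_{lk}^p`. -/
theorem statement15 (m : ℕ) (hm : 1 ≤ m) (q : ℕ) (k l : Fin m) :
    Etil q k l = (-1 : ℂ) ^ q •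
      ∑ p ∈ Finset.range (q + 1),
        (∑ s ∈ Finset.Icc p q, ((q.choose s : ℂ) * (-(m : ℂ)) ^ (q - s)) • Kc m (s - p))
          * Epow p l k := by
  rw [Etil_eq]
  congr 1
  rw [Finset.Nat.sum_antidiagonal_eq_sum_range_succ_mk]
  simp only [Gaux, Finset.smul_sum, Finset.sum_mul]
  rw [Finset.sum_comm' (t' := Finset.range (q + 1)) (s' := fun p => Finset.Icc p q)]
  · refine Finset.sum_congr rfl fun p _ => Finset.sum_congr rfl fun s _ => ?_
    rw [mul_smul, smul_mul_assoc, smul_mul_assoc, Nat.cast_smul_eq_nsmul]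
  · intro a b
    simp only [Finset.mem_range, Finset.mem_Icc]
    omega
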